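/- Weak Young inequality: if 1 < p, q, r < ∞ satisfy 1 + 1/r = 1/p + 1/q, then there is a constant C = C(p,q) such that for all f ∈ L^{p,∞}(ℝ) and g ∈ L^{q,∞}(ℝ), the convolution f ∗ g belongs to L^{r,∞}(ℝ) with ‖f ∗ g‖_{r,∞} ≤ C ‖f‖_{p,∞} ‖g‖_{q,∞}. -/

import Mathlib

open MeasureTheory

/-- `WeakLpBound p f M` expresses that the weak Marcinkiewicz `L^{p,∞}(ℝ)` quantity
`sup { |E|^(-1+1/p) ∫_E |f| }` is bounded by `M`. -/
def WeakLpBound (p : ℝ) (f : ℝ → ℝ) (M : ℝ) : Prop :=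
  ∀ E : Set ℝ, MeasurableSet E → 0 < volume E → volume E < ⊤ →
    ∫ s in E, |f s| ≤ M * (volume E).toReal ^ (1 - 1/p)

/-- The extended nonnegative form of `WeakLpBound`, with `a = 1 - 1/p`. -/
def MarcinkiewiczBound (a : ℝ) (F : ℝ → ENNReal) (A : ℝ) : Prop :=
  ∀ E : Set ℝ, MeasurableSet E → volume E < ⊤ →
    ∫⁻ s in E, F s ≤ ENNReal.ofReal (A * (volume E).toReal ^ a)

theorem WeakLpBound.nonneg {p : ℝ} {f : ℝ → ℝ} {M : ℝ} (h : WeakLpBound p f M) : 0 ≤ M := by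
  have h1 := h (Set.Icc 0 1) measurableSet_Icc (by simp) (by simp)
  have h2 : 0 ≤ ∫ s in Set.Icc (0 : ℝ) 1, |f s| := integral_nonneg fun _ => abs_nonneg _
  have h3 := h2.trans h1
  simpa using h3

/-- Since `f` is measurable, truncating it shows that the convention `∫ = 0` for nonintegrable
functions plays no role in `WeakLpBound`. -/
theorem WeakLpBound.marcinkiewiczBound {p : ℝ} (hp : 1 < p) {f : ℝ → ℝ} (hf : Measurable f)
    {M : ℝ} (h : WeakLpBound p f M) :
    MarcinkiewiczBound (1 - 1 / p) (fun x => ENNReal.ofReal |f x|) M := by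
  intro E hE hE'
  have ha : 0 ≤ 1 - 1 / p := by
    have : 1 / p ≤ 1 := by rw [div_le_one (by linarith)]; exact hp.le
    linarith
  let S : ℕ → Set ℝ := fun n => E ∩ {x | |f x| ≤ n}
  have hS : ∀ n, MeasurableSet (S n) := fun n =>
    hE.inter (measurableSet_le hf.abs measurable_const)
  have hmono : Monotone S := fun m n hmn x hx =>
    ⟨hx.1, le_trans (show |f x| ≤ m from hx.2) (Nat.cast_le.2 hmn)⟩
  have hU : ⋃ n, S n = E := by
    ext x
    simp only [S, Set.mem_iUnion, Set.mem_inter_iff, Set.mem_ofPred_eq]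
    exact ⟨fun ⟨_, hx, _⟩ => hx, fun hx => (exists_nat_ge |f x|).imp fun _ hn => ⟨hx, hn⟩⟩
  have hbound : ∀ n, ∫⁻ s in S n, ENNReal.ofReal |f s| ≤
      ENNReal.ofReal (M * (volume E).toReal ^ (1 - 1 / p)) := by
    intro n
    have hfin : volume (S n) < ⊤ := (measure_mono Set.inter_subset_left).trans_lt hE'
    rcases eq_or_ne (volume (S n)) 0 with h0 | h0
    · rw [setLIntegral_measure_zero _ _ h0]; exact zero_le
    have hint : IntegrableOn (fun s => |f s|) (S n) := by
      refine IntegrableOn.of_bound hfin hf.abs.aestronglyMeasurable n ?_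
      filter_upwards [ae_restrict_mem (hS n)] with x hx
      simpa using hx.2
    rw [← ofReal_integral_eq_lintegral_ofReal hint (ae_of_all _ fun _ => abs_nonneg _)]
    refine ENNReal.ofReal_le_ofReal ((h _ (hS n) (pos_iff_ne_zero.2 h0) hfin).trans ?_)
    refine mul_le_mul_of_nonneg_left ?_ h.nonneg
    exact Real.rpow_le_rpow ENNReal.toReal_nonneg
      (ENNReal.toReal_mono hE'.ne (measure_mono Set.inter_subset_left)) ha
  let ν := volume.withDensity fun x => ENNReal.ofReal |f x|
  have hν : ∀ n, ν (S n) ≤ ENNReal.ofReal (M * (volume E).toReal ^ (1 - 1 / p)) := fun n => by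
    rw [withDensity_apply _ (hS n)]; exact hbound n
  rw [← withDensity_apply _ hE]
  change ν E ≤ _
  rw [← hU, hmono.measure_iUnion, hU]
  exact iSup_le hν

theorem MarcinkiewiczBound.lintegral_comp_le {a : ℝ} {F : ℝ → ENNReal} {A : ℝ}
    (h : MarcinkiewiczBound a F A) (hF : Measurable F) {φ ψ : ℝ → ℝ}
    (hφ : MeasurePreserving φ volume volume) (hψ : MeasurePreserving ψ volume volume)
    (hψφ : ∀ x, ψ (φ x) = x) {E : Set ℝ} (hE : MeasurableSet E) (hE' : volume E < ⊤) :
    ∫⁻ x in E, F (φ x) ≤ ENNReal.ofReal (A * (volume E).toReal ^ a) := by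
  have hm : MeasurableSet (ψ ⁻¹' E) := hψ.measurable hE
  have hv : volume (ψ ⁻¹' E) = volume E := hψ.measure_preimage hE.nullMeasurableSet
  have hpre : φ ⁻¹' (ψ ⁻¹' E) = E := by ext x; simp [hψφ]
  have h1 := hφ.setLIntegral_comp_preimage hm hF
  rw [hpre] at h1
  rw [h1, ← hv]
  exact h _ hm (hv ▸ hE')

theorem Real.le_rpow_of_mul_le_mul_rpow {a t s K : ℝ} (ha : a < 1) (ht : 0 < t) (hs : 0 ≤ s)
    (hK : 0 ≤ K) (h : t * s ≤ K * s ^ a) : s ≤ (K / t) ^ (1 / (1 - a)) := by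
  rcases hs.eq_or_lt with rfl | hs
  · positivity
  have h1 : s ^ (1 - a) ≤ K / t := by
    rw [Real.rpow_sub hs, Real.rpow_one, div_le_div_iff₀ (by positivity) ht]
    linarith
  calc s = (s ^ (1 - a)) ^ (1 / (1 - a)) := by
        rw [← Real.rpow_mul hs.le, mul_one_div_cancel (by linarith), Real.rpow_one]
    _ ≤ _ := Real.rpow_le_rpow (by positivity) h1 (by
        have : 0 < 1 - a := by linarith
        positivity)

theorem lintegral_Ioo_rpow_neg {β c T : ℝ} (hβ : β < 1) (hc : 0 ≤ c) (hT : 0 ≤ T) :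
    ∫⁻ t in Set.Ioo 0 T, ENNReal.ofReal (c * t ^ (-β)) =
      ENNReal.ofReal (c * (T ^ (1 - β) / (1 - β))) := by
  have hint : IntervalIntegrable (fun t : ℝ => t ^ (-β)) volume 0 T :=
    intervalIntegral.intervalIntegrable_rpow' (by linarith)
  have hint' : IntegrableOn (fun t : ℝ => c * t ^ (-β)) (Set.Ioc 0 T) :=
    ((intervalIntegrable_iff_integrableOn_Ioc_of_le hT).1 hint).const_mul c
  rw [setLIntegral_congr Ioo_ae_eq_Ioc, ← ofReal_integral_eq_lintegral_ofReal hint',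
    ← intervalIntegral.integral_of_le hT, intervalIntegral.integral_const_mul,
    integral_rpow (Or.inl (by linarith)), Real.zero_rpow (by linarith)]
  · congr 3
    · rw [sub_zero]; congr 1; ring
    · ring
  · filter_upwards [ae_restrict_mem measurableSet_Ioc] with t ht
    exact mul_nonneg hc (Real.rpow_nonneg ht.1.le _)

theorem MarcinkiewiczBound.lintegral_convolution_le {a b : ℝ} (hb : 0 < b)
    (hab : a + b < 1) {F G : ℝ → ENNReal} (hF : Measurable F) (hG : Measurable G) {A B : ℝ}
    (hA : 0 ≤ A) (hB : 0 ≤ B) (hFA : MarcinkiewiczBound a F A) (hGB : MarcinkiewiczBound b G B)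
    {E : Set ℝ} (hE : MeasurableSet E) (hE' : volume E < ⊤) (hE0 : 0 < volume E) :
    ∫⁻ x in E, ∫⁻ y, F (x - y) * G y ≤
      ENNReal.ofReal (1 / (1 - b / (1 - a)) * A * B * (volume E).toReal ^ (a + b)) := by
  set e := (volume E).toReal with he
  have he0 : 0 < e := ENNReal.toReal_pos hE0.ne' hE'.ne
  have ha1 : 0 < 1 - a := by linarith
  set β := b / (1 - a) with hβ
  have hβ1 : β < 1 := by rw [hβ, div_lt_one ha1]; linarith
  have hβ0 : 0 < β := div_pos hb ha1
  have hFm : Measurable fun z : ℝ × ℝ => F (z.1 - z.2) :=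
    hF.comp (measurable_fst.sub measurable_snd)
  set Φ : ℝ → ENNReal := fun y => ∫⁻ x in E, F (x - y) with hΦ
  have hΦm : Measurable Φ := hFm.lintegral_prod_left'
  set T := A * e ^ a with hT
  have hT0 : 0 ≤ T := by positivity
  have hΦT : ∀ y, Φ y ≤ ENNReal.ofReal T := fun y =>
    hFA.lintegral_comp_le hF (measurePreserving_sub_right volume y)
      (measurePreserving_add_right volume y) (fun x => by ring) hE hE'
  have hΦtop : ∀ y, Φ y ≠ ⊤ := fun y => ((hΦT y).trans_lt ENNReal.ofReal_lt_top).ne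
  have hΦS : ∀ S : Set ℝ, MeasurableSet S → volume S < ⊤ →
      ∫⁻ y in S, Φ y ≤ ENNReal.ofReal (A * (volume S).toReal ^ a) * volume E := by
    intro S hS hS'
    rw [hΦ, lintegral_lintegral_swap 
        (f := fun y x => F (x - y)) (hFm.comp measurable_swap).aemeasurable,
      ← setLIntegral_const]
    exact lintegral_mono fun x =>
      hFA.lintegral_comp_le hF (Measure.measurePreserving_sub_left volume x)
        (Measure.measurePreserving_sub_left volume x) (fun y => by ring) hS hS'
  let ν := volume.withDensity G
  have hνS : ∀ t, 0 < t → ∀ S : Set ℝ, MeasurableSet S → volume S < ⊤ →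
      (∀ y ∈ S, t < (Φ y).toReal) →
      ν S ≤ ENNReal.ofReal (B * (e * A) ^ β * t ^ (-β)) := by
    intro t ht S hS hS' hSt
    have h1 : ENNReal.ofReal t * volume S ≤
        ENNReal.ofReal (A * (volume S).toReal ^ a) * volume E := by
      rw [← setLIntegral_const]
      refine le_trans (setLIntegral_mono hΦm fun y hy => ?_) (hΦS S hS hS')
      exact ENNReal.ofReal_le_of_le_toReal (hSt y hy).le
    have h2 : t * (volume S).toReal ≤ e * A * (volume S).toReal ^ a := by
      have := ENNReal.toReal_mono (ENNReal.mul_ne_top ENNReal.ofReal_ne_top hE'.ne) h1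
      rw [ENNReal.toReal_mul, ENNReal.toReal_mul, ENNReal.toReal_ofReal ht.le,
        ENNReal.toReal_ofReal (by positivity)] at this
      linarith
    have h3 := Real.le_rpow_of_mul_le_mul_rpow (by linarith) ht ENNReal.toReal_nonneg
      (by positivity) h2
    rw [withDensity_apply _ hS]
    refine (hGB S hS hS').trans (ENNReal.ofReal_le_ofReal ?_)
    rw [mul_assoc]
    refine mul_le_mul_of_nonneg_left ?_ hB
    calc (volume S).toReal ^ b ≤ ((e * A / t) ^ (1 / (1 - a))) ^ b :=
          Real.rpow_le_rpow ENNReal.toReal_nonneg h3 hb.le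
      _ = (e * A / t) ^ β := by
          rw [← Real.rpow_mul (by positivity), hβ]; congr 1; ring
      _ = (e * A) ^ β * t ^ (-β) := by
          rw [Real.div_rpow (by positivity) ht.le, Real.rpow_neg ht.le, div_eq_mul_inv]
  have hν : ∀ t, 0 < t →
      ν {y | t < (Φ y).toReal} ≤ ENNReal.ofReal (B * (e * A) ^ β * t ^ (-β)) := by
    intro t ht
    have hm : MeasurableSet {y | t < (Φ y).toReal} :=
      measurableSet_lt measurable_const hΦm.ennreal_toReal
    have hmono : Monotone fun n => {y | t < (Φ y).toReal} ∩ spanningSets volume n :=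
      fun _ _ hmn => Set.inter_subset_inter_right _ (monotone_spanningSets volume hmn)
    rw [← Set.inter_univ {y | t < (Φ y).toReal}, ← iUnion_spanningSets (volume : Measure ℝ),
      Set.inter_iUnion, hmono.measure_iUnion]
    exact iSup_le fun n => hνS t ht _ (hm.inter (measurableSet_spanningSets _ _))
      ((measure_mono Set.inter_subset_right).trans_lt (measure_spanningSets_lt_top _ _))
      fun y hy => hy.1
  calc ∫⁻ x in E, ∫⁻ y, F (x - y) * G y
      = ∫⁻ y, ∫⁻ x in E, F (x - y) * G y :=
        lintegral_lintegral_swap (hFm.mul (hG.comp measurable_snd)).aemeasurable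
    _ = ∫⁻ y, G y * ENNReal.ofReal (Φ y).toReal := by
        refine lintegral_congr fun y => ?_
        rw [ENNReal.ofReal_toReal (hΦtop y), mul_comm (G y)]
        exact lintegral_mul_const _ (hF.comp (measurable_id.sub_const y))
    _ = ∫⁻ y, ENNReal.ofReal (Φ y).toReal ∂ν :=
        (lintegral_withDensity_eq_lintegral_mul _ hG hΦm.ennreal_toReal.ennreal_ofReal).symm
    _ = ∫⁻ t in Set.Ioi 0, ν {y | t < (Φ y).toReal} :=
        lintegral_eq_lintegral_meas_lt ν (ae_of_all _ fun _ => ENNReal.toReal_nonneg)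
          hΦm.ennreal_toReal.aemeasurable
    _ ≤ ∫⁻ t in Set.Ioi 0, (Set.Ioo 0 T).indicator
          (fun t => ENNReal.ofReal (B * (e * A) ^ β * t ^ (-β))) t := by
        refine setLIntegral_mono' measurableSet_Ioi fun t ht => ?_
        by_cases htT : t < T
        · rw [Set.indicator_of_mem (show t ∈ Set.Ioo 0 T from ⟨ht, htT⟩)]; exact hν t ht
        · have : {y | t < (Φ y).toReal} = ∅ := by
            ext y
            simp only [Set.mem_ofPred_eq, Set.mem_empty_iff_false, iff_false, not_lt]
            exact (ENNReal.toReal_le_of_le_ofReal hT0 (hΦT y)).trans (not_lt.1 htT)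
          rw [this, measure_empty]; exact zero_le
    _ ≤ ∫⁻ t, (Set.Ioo 0 T).indicator
          (fun t => ENNReal.ofReal (B * (e * A) ^ β * t ^ (-β))) t := setLIntegral_le_lintegral _ _
    _ = ENNReal.ofReal (B * (e * A) ^ β * (T ^ (1 - β) / (1 - β))) := by
        rw [lintegral_indicator measurableSet_Ioo]
        exact lintegral_Ioo_rpow_neg hβ1 (by positivity) hT0
    _ = _ := by
        congr 1
        have hAβ : A ^ β * A ^ (1 - β) = A := by
          rw [← Real.rpow_add' hA (by norm_num), add_sub_cancel, Real.rpow_one]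
        have heβ : e ^ β * (e ^ a) ^ (1 - β) = e ^ (a + b) := by
          rw [← Real.rpow_mul he0.le, ← Real.rpow_add he0]
          congr 1
          rw [hβ]; field_simp; ring
        rw [hT, Real.mul_rpow he0.le hA, Real.mul_rpow hA (by positivity), ← heβ]
        calc _ = 1 / (1 - β) * (A ^ β * A ^ (1 - β)) * B * (e ^ β * (e ^ a) ^ (1 - β)) := by ring
          _ = _ := by rw [hAβ]

/-- Weak Young inequality: if `1 + 1/r = 1/p + 1/q` with `1 < p, q, r < ∞`,
then the convolution of `f ∈ L^{p,∞}(ℝ)` and `g ∈ L^{q,∞}(ℝ)` lies in `L^{r,∞}(ℝ)`,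
with `‖f ∗ g‖_{r,∞} ≤ C(p,q) ‖f‖_{p,∞} ‖g‖_{q,∞}`. -/
theorem weak_young_inequality (p q r : ℝ) (hp : 1 < p) (hq : 1 < q) (hr : 1 < r)
    (hpqr : 1 + 1/r = 1/p + 1/q) :
    ∃ C : ℝ, 0 < C ∧ ∀ f g : ℝ → ℝ, Measurable f → Measurable g →
      ∀ Mf Mg : ℝ, WeakLpBound p f Mf → WeakLpBound q g Mg →
        WeakLpBound r (fun x => ∫ y : ℝ, f (x - y) * g y) (C * Mf * Mg) := by
  have hp1 : 1 / p < 1 := (div_lt_one (by linarith)).2 hp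
  have hq1 : 1 / q < 1 := (div_lt_one (by linarith)).2 hq
  have hr0 : 0 < 1 / r := by positivity
  have hC : 0 < 1 / (1 - (1 - 1 / q) / (1 - (1 - 1 / p))) := by
    refine one_div_pos.2 (sub_pos.2 ?_)
    rw [div_lt_one] <;> linarith [one_div_pos.2 (zero_lt_one.trans hp)]
  refine ⟨_, hC, fun f g hf hg Mf Mg hMf hMg E hE hE0 hE' => ?_⟩
  have hMf0 := hMf.nonneg
  have hMg0 := hMg.nonneg
  have key := MarcinkiewiczBound.lintegral_convolution_le (sub_pos.2 hq1)
    (by linarith) hf.abs.ennreal_ofReal hg.abs.ennreal_ofReal hMf0 hMg0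
    (hMf.marcinkiewiczBound hp hf) (hMg.marcinkiewiczBound hq hg) hE hE' hE0
  rw [show 1 - 1 / p + (1 - 1 / q) = 1 - 1 / r by linarith] at key
  refine (Real.le_norm_self _).trans ((norm_integral_le_lintegral_norm _).trans ?_)
  refine ENNReal.toReal_le_of_le_ofReal (by positivity) (le_trans (lintegral_mono fun x => ?_) key)
  rw [Real.norm_eq_abs, abs_abs, ← Real.norm_eq_abs, ofReal_norm]
  refine (enorm_integral_le_lintegral_enorm _).trans_eq (lintegral_congr fun y => ?_)
  rw [enorm_mul, ← ofReal_norm, ← ofReal_norm, Real.norm_eq_abs, Real.norm_eq_abs]
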